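/- Let V : ℝ → ℝⁿ and W : ℝ → Matrix (Fin n) (Fin n) ℝ be differentiable on [0,T) and satisfy the co-evolution system V'(t) = W(t)·V(t) and W'(t) = V(t)V(t)ᵀ for all t ∈ [0,T), with W(0) symmetric. Then V is twice differentiable on [0,T) and satisfies the second-order equation V''(t) = 2‖V(t)‖²·V(t) − C·V(t) for all t ∈ [0,T), where C := V(0)V(0)ᵀ − W(0)² and ‖·‖ denotes the Euclidean norm on ℝⁿ. -/

import Mathlib

open Matrix Set

/-!
The matrix `V Vᵀ - W²` is a first integral. Since `W' = V Vᵀ` is symmetric, `W - Wᵀ` has zero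
derivative, so `W` stays symmetric. Hence
`(V Vᵀ - W²)' = W V Vᵀ + V (W V)ᵀ - V Vᵀ W - W V Vᵀ = V Vᵀ (Wᵀ - W) = 0`, that is,
`W² = V Vᵀ - C` on `[0,T)`. The product rule then gives
`(W V)' = V Vᵀ V + W² V = 2 (V Vᵀ) V - C V`, and `(V Vᵀ) V = ‖V‖² V`.
-/

theorem eq_initial_of_hasDerivAt_zero {T : ℝ} {f : ℝ → ℝ}
    (hf : ∀ t ∈ Set.Ico (0 : ℝ) T, HasDerivAt f 0 t) :
    ∀ t ∈ Set.Ico (0 : ℝ) T, f t = f 0 := by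
  intro t ht
  refine constant_of_has_deriv_right_zero (a := 0) (b := t) ?_ ?_ t ⟨ht.1, le_rfl⟩
  · exact fun s hs => (hf s ⟨hs.1, hs.2.trans_lt ht.2⟩).continuousAt.continuousWithinAt
  · exact fun s hs => (hf s ⟨hs.1, hs.2.trans ht.2⟩).hasDerivWithinAt

/-- If `(V, W)` solves the co-evolution system `V' = W·V`, `W' = V·Vᵀ` on `[0,T)` with `W(0)`
symmetric, then `V` is twice differentiable with `V'' = 2‖V‖²·V − C·V`, where
`C = V(0)V(0)ᵀ − W(0)²` and `‖V(t)‖² = ∑ i, V(t)ᵢ²` is the squared Euclidean norm. -/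
theorem coevolution_opinion_second_order
    (n : ℕ) (T : ℝ) (hT : 0 < T)
    (V : ℝ → Fin n → ℝ) (W : ℝ → Matrix (Fin n) (Fin n) ℝ)
    (hV : ∀ t ∈ Set.Ico (0 : ℝ) T, HasDerivAt V (W t *ᵥ V t) t)
    (hW : ∀ t ∈ Set.Ico (0 : ℝ) T, ∀ i j,
      HasDerivAt (fun s => W s i j) (vecMulVec (V t) (V t) i j) t)
    (hsym : (W 0)ᵀ = W 0)
    (C : Matrix (Fin n) (Fin n) ℝ)
    (hC : C = vecMulVec (V 0) (V 0) - W 0 ^ 2) :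
    ∀ t ∈ Set.Ico (0 : ℝ) T,
      HasDerivAt (fun s => W s *ᵥ V s)
        ((2 * ∑ i, V t i ^ 2) • V t - C *ᵥ V t) t := by
  have hVi : ∀ t ∈ Set.Ico (0 : ℝ) T, ∀ i,
      HasDerivAt (fun s => V s i) (∑ k, W t i k * V t k) t :=
    fun t ht i => hasDerivAt_pi.1 (hV t ht) i
  have hWij : ∀ t ∈ Set.Ico (0 : ℝ) T, ∀ i j,
      HasDerivAt (fun s => W s i j) (V t i * V t j) t := hW
  have hWsymm : ∀ t ∈ Set.Ico (0 : ℝ) T, ∀ i j, W t i j = W t j i := by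
    intro t ht i j
    have h := eq_initial_of_hasDerivAt_zero (f := fun s => W s i j - W s j i)
      (fun s hs => by
        refine ((hWij s hs i j).fun_sub (hWij s hs j i)).congr_deriv ?_
        ring) t ht
    have h0 : W 0 j i = W 0 i j := congrFun (congrFun hsym i) j
    simp only [h0, sub_self] at h
    linarith
  have hfirst : ∀ t ∈ Set.Ico (0 : ℝ) T, ∀ i j,
      V t i * V t j - ∑ k, W t i k * W t k j = C i j := by
    intro t ht i j
    have h := eq_initial_of_hasDerivAt_zero
      (f := fun s => V s i * V s j - ∑ k, W s i k * W s k j)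
      (fun s hs => by
        refine (((hVi s hs i).fun_mul (hVi s hs j)).fun_sub
          (HasDerivAt.fun_sum (u := Finset.univ)
            (fun k _ => (hWij s hs i k).fun_mul (hWij s hs k j)))).congr_deriv ?_
        rw [Finset.sum_mul, Finset.mul_sum, ← Finset.sum_add_distrib,
          ← Finset.sum_sub_distrib]
        refine Finset.sum_eq_zero fun k _ => ?_
        rw [hWsymm s hs j k]
        ring) t ht
    rw [hC, pow_two]
    simpa [vecMulVec_apply, Matrix.mul_apply] using h
  intro t ht
  refine hasDerivAt_pi.2 fun i => ?_
  change HasDerivAt (fun s => ∑ j, W s i j * V s j) _ t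
  refine (HasDerivAt.fun_sum (u := Finset.univ)
    (fun j _ => (hWij t ht i j).fun_mul (hVi t ht j))).congr_deriv ?_
  have hWW : ∑ j, W t i j * ∑ k, W t j k * V t k
      = ∑ k, (V t i * V t k - C i k) * V t k := by
    simp_rw [Finset.mul_sum]
    rw [Finset.sum_comm]
    refine Finset.sum_congr rfl fun k _ => ?_
    rw [← hfirst t ht i k, sub_sub_cancel, Finset.sum_mul]
    exact Finset.sum_congr rfl fun j _ => by ring
  rw [Finset.sum_add_distrib, hWW, ← Finset.sum_add_distrib]
  simp only [Pi.sub_apply, Pi.smul_apply, smul_eq_mul, Matrix.mulVec, dotProduct]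
  rw [Finset.mul_sum, Finset.sum_mul, ← Finset.sum_sub_distrib]
  exact Finset.sum_congr rfl fun k _ => by ring
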